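/- Signed permutations of B_n are in bijection with pairs of standard domino tableaux of the same shape, where the shape is a partition of 2n with empty 2-core. -/

import Mathlib

open scoped Classical

noncomputable section

/-- A signed permutation of `{1, ..., n}`: a permutation `f` of `ℤ` with
`f(-i) = -f(i)` which is the identity outside `{-n, ..., n}`. -/
def IsSignedPerm (n : ℕ) (f : Equiv.Perm ℤ) : Prop :=
  (∀ i : ℤ, f (-i) = -f i) ∧ ∀ i : ℤ, (n : ℤ) < |i| → f i = i

/-- Two cells of a Young diagram are adjacent (form a possible domino). -/
def dominoAdj (c d : ℕ × ℕ) : Prop :=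
  (c.1 = d.1 ∧ (c.2 + 1 = d.2 ∨ d.2 + 1 = c.2)) ∨
  (c.2 = d.2 ∧ (c.1 + 1 = d.1 ∨ d.1 + 1 = c.1))

/-- `tile` is a tiling of the Young diagram `μ` by dominoes: it is an involution of
the cells of `μ` matching each cell with an adjacent one (and the identity elsewhere). -/
def IsDominoTiling (μ : YoungDiagram) (tile : ℕ × ℕ → ℕ × ℕ) : Prop :=
  (∀ c ∈ μ.cells, tile c ∈ μ.cells ∧ tile (tile c) = c ∧ dominoAdj c (tile c)) ∧
  ∀ c ∉ μ.cells, tile c = c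

/-- `(tile, lab)` is a semistandard domino tableau of shape `μ`: a domino tiling of `μ`
with non-negative integer labels (constant on each domino), weakly increasing along rows
and strictly increasing down columns (where the two cells of a vertical domino do not
count as a column violation). Labels vanish outside `μ`. -/
def IsSSDT (μ : YoungDiagram) (tile : ℕ × ℕ → ℕ × ℕ) (lab : ℕ × ℕ → ℕ) : Prop :=
  IsDominoTiling μ tile ∧
  (∀ c ∈ μ.cells, lab (tile c) = lab c) ∧
  (∀ c ∉ μ.cells, lab c = 0) ∧
  (∀ i j : ℕ, (i, j) ∈ μ.cells → (i, j + 1) ∈ μ.cells → lab (i, j) ≤ lab (i, j + 1)) ∧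
  (∀ i j : ℕ, (i, j) ∈ μ.cells → (i + 1, j) ∈ μ.cells → tile (i, j) ≠ (i + 1, j) →
    lab (i, j) < lab (i + 1, j))

/-- The extra rule on semistandard domino tableaux: if the top-leftmost domino is
vertical then it cannot be labelled `0`. -/
def ZeroRule (μ : YoungDiagram) (tile : ℕ × ℕ → ℕ × ℕ) (lab : ℕ × ℕ → ℕ) : Prop :=
  tile (0, 0) = (1, 0) → lab (0, 0) ≠ 0

/-- `(tile, lab)` is a standard domino tableau of shape `μ` with `n` dominoes:
a semistandard domino tableau in which each label `1, ..., n` is used by exactly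
one domino. -/
def IsSDT (μ : YoungDiagram) (n : ℕ) (tile : ℕ × ℕ → ℕ × ℕ) (lab : ℕ × ℕ → ℕ) : Prop :=
  IsSSDT μ tile lab ∧ (∀ c ∈ μ.cells, 1 ≤ lab c ∧ lab c ≤ n) ∧
  ∀ k, 1 ≤ k → k ≤ n → (μ.cells.filter fun c => lab c = k).card = 2

/-- Standard domino tableaux of shape `μ` with `n` dominoes. -/
def SDT (μ : YoungDiagram) (n : ℕ) :=
  {x : (ℕ × ℕ → ℕ × ℕ) × (ℕ × ℕ → ℕ) // IsSDT μ n x.1 x.2}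

/-! ### Height functions of Young diagrams -/

theorem exists_diag_bound (μ : YoungDiagram) (k : ℤ) :
    ∃ m : ℕ, (m + (-k).toNat, m + k.toNat) ∉ μ := by
  by_contra! h
  have hinj : Function.Injective (fun m : ℕ => (m + (-k).toNat, m + k.toNat)) := by
    intro a b hab
    simp at hab
    exact hab
  have : (Set.range (fun m : ℕ => (m + (-k).toNat, m + k.toNat))).Finite :=
    (μ.cells.finite_toSet).subset (by
      rintro _ ⟨m, rfl⟩
      exact h m)
  exact Set.infinite_range_of_injective hinj this

def diagCount (μ : YoungDiagram) (k : ℤ) : ℕ := Nat.find (exists_diag_bound μ k)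

theorem lt_diagCount (μ : YoungDiagram) (k : ℤ) (m : ℕ) :
    m < diagCount μ k ↔ (m + (-k).toNat, m + k.toNat) ∈ μ := by
  constructor
  · intro h
    by_contra h'
    exact Nat.find_min (exists_diag_bound μ k) h h'
  · intro h
    by_contra! h'
    exact Nat.find_spec (exists_diag_bound μ k)
      (μ.up_left_mem (Nat.add_le_add_right h' _) (Nat.add_le_add_right h' _) h)

def ht (μ : YoungDiagram) (k : ℤ) : ℤ := 2 * diagCount μ k + |k|

theorem mem_iff_ht (μ : YoungDiagram) (i j : ℕ) :
    (i, j) ∈ μ ↔ ((i : ℤ) + j < ht μ ((j : ℤ) - i)) := by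
  have h := lt_diagCount μ ((j : ℤ) - i) (min i j)
  have e1 : min i j + (-((j : ℤ) - i)).toNat = i := by omega
  have e2 : min i j + ((j : ℤ) - i).toNat = j := by omega
  rw [e1, e2] at h
  rw [← h, ht]
  rcases abs_cases ((j : ℤ) - i) with ⟨h1, h2⟩ | ⟨h1, h2⟩ <;> rw [h1] <;> omega

theorem ht_ge (μ : YoungDiagram) (k : ℤ) : |k| ≤ ht μ k := by
  unfold ht; omega

theorem ht_parity (μ : YoungDiagram) (k : ℤ) : ∃ c : ℤ, ht μ k = k + 2 * c := by
  unfold ht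
  rcases abs_cases k with ⟨h1, h2⟩ | ⟨h1, h2⟩ <;> rw [h1]
  · exact ⟨diagCount μ k, by ring⟩
  · exact ⟨diagCount μ k - k, by ring⟩

/-- Two candidate heights that cut the diagonal at the same place agree. -/
theorem height_unique (k h h' : ℤ) (h1 : |k| ≤ h) (h1' : |k| ≤ h')
    (h2 : ∃ c, h = k + 2 * c) (h2' : ∃ c, h' = k + 2 * c)
    (H : ∀ i j : ℕ, (j : ℤ) - i = k → ((i : ℤ) + j < h ↔ (i : ℤ) + j < h')) : h = h' := by
  wlog hlt : h < h' generalizing h h'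
  · by_contra hne
    exact hne (this h' h h1' h1 h2' h2 (fun i j hij => (H i j hij).symm) (by omega)).symm
  obtain ⟨c, rfl⟩ := h2
  have := abs_le.mp h1
  have := (H c.toNat (k + c).toNat (by omega)).mpr (by omega)
  omega

def ValidHt (e : ℤ → ℤ) : Prop :=
  (∀ k, e (k + 1) = e k + 1 ∨ e (k + 1) = e k - 1) ∧ ∃ N : ℕ, ∀ k : ℤ, (N : ℤ) ≤ |k| → e k = |k|

theorem ht_valid (μ : YoungDiagram) : ValidHt (ht μ) := by
  constructor
  · intro k
    have key : ∀ a b : ℕ, (a, b + 1) ∈ μ → (a, b) ∈ μ := fun a b h =>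
      μ.up_left_mem le_rfl (Nat.le_succ _) h
    have key' : ∀ a b : ℕ, (a + 1, b) ∈ μ → (a, b) ∈ μ := fun a b h =>
      μ.up_left_mem (Nat.le_succ _) le_rfl h
    obtain ⟨c, hc⟩ := ht_parity μ k
    obtain ⟨c', hc'⟩ := ht_parity μ (k + 1)
    have g := abs_le.mp (ht_ge μ k)
    have g' := abs_le.mp (ht_ge μ (k + 1))
    -- upper bound
    have u1 : ht μ (k + 1) ≤ ht μ k + 1 := by
      by_contra! hcon
      have hm : (c.toNat, (k + c).toNat + 1) ∈ μ := by
        rw [mem_iff_ht]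
        have : ((((k + c).toNat + 1 : ℕ) : ℤ) - (c.toNat : ℕ)) = k + 1 := by omega
        rw [this]; omega
      have := key _ _ hm
      rw [mem_iff_ht] at this
      have e : ((((k + c).toNat : ℕ) : ℤ) - (c.toNat : ℕ)) = k := by omega
      rw [e] at this; omega
    have u2 : ht μ k ≤ ht μ (k + 1) + 1 := by
      by_contra! hcon
      have hm : (c'.toNat + 1, (k + 1 + c').toNat) ∈ μ := by
        rw [mem_iff_ht]
        have : ((((k + 1 + c').toNat : ℕ) : ℤ) - (c'.toNat + 1 : ℕ)) = k := by omega
        rw [this]; omega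
      have := key' _ _ hm
      rw [mem_iff_ht] at this
      have e : ((((k + 1 + c').toNat : ℕ) : ℤ) - (c'.toNat : ℕ)) = k + 1 := by omega
      rw [e] at this; omega
    omega
  · refine ⟨μ.cells.sup (fun c => c.1 + c.2 + 1), fun k hk => ?_⟩
    unfold ht
    suffices diagCount μ k = 0 by simp [this]
    by_contra h0
    have := (lt_diagCount μ k 0).mp (by omega)
    have h2 := Finset.le_sup (f := fun c : ℕ × ℕ => c.1 + c.2 + 1) this
    simp only at h2
    rcases abs_cases k with ⟨h1, h2⟩ | ⟨h1, h2⟩ <;> omega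

theorem ht_injective : Function.Injective ht := by
  intro μ ν h
  ext ⟨i, j⟩
  rw [YoungDiagram.mem_cells, YoungDiagram.mem_cells, mem_iff_ht, mem_iff_ht, h]

theorem valid_abs_le {e : ℤ → ℤ} (h : ValidHt e) (k : ℤ) : |k| ≤ e k := by
  obtain ⟨h1, N, hN⟩ := h
  have up : ∀ m : ℕ, ∀ k, e (k + m) ≤ e k + m := by
    intro m
    induction m with
    | zero => intro k; simp
    | succ m ih =>
      intro k
      have := ih k
      have h2 := h1 (k + m)
      push_cast
      rw [← add_assoc]
      omega
  have dn : ∀ m : ℕ, ∀ k, e k ≤ e (k + m) + m := by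
    intro m
    induction m with
    | zero => intro k; simp
    | succ m ih =>
      intro k
      have := ih k
      have h2 := h1 (k + m)
      have e3 : k + ((m + 1 : ℕ) : ℤ) = k + m + 1 := by push_cast; ring
      rw [e3]
      push_cast
      omega
  rw [abs_le]
  constructor
  · have h3 := dn (N + k.natAbs) (k - (N + k.natAbs : ℕ))
    rw [sub_add_cancel] at h3
    have h5 : |k - (N + k.natAbs : ℕ)| = -(k - (N + k.natAbs : ℕ)) := abs_of_nonpos (by omega)
    rw [hN (k - (N + k.natAbs : ℕ)) (by rw [h5]; omega), h5] at h3
    push_cast at *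
    omega
  · have h3 := up (N + k.natAbs) k
    have h5 : |k + (N + k.natAbs : ℕ)| = (k + (N + k.natAbs : ℕ)) := abs_of_nonneg (by omega)
    rw [hN _ (by rw [h5]; omega), h5] at h3
    push_cast at *
    omega

theorem valid_parity {e : ℤ → ℤ} (h : ValidHt e) (k : ℤ) : ∃ c, e k = k + 2 * c := by
  obtain ⟨h1, N, hN⟩ := h
  have up : ∀ m : ℕ, ∀ k, ∃ c, e (k + m) = e k + m + 2 * c := by
    intro m
    induction m with
    | zero => intro k; exact ⟨0, by simp⟩
    | succ m ih =>
      intro k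
      obtain ⟨c, hc⟩ := ih k
      have h2 := h1 (k + m)
      push_cast
      rw [← add_assoc]
      rcases h2 with h2 | h2
      · exact ⟨c, by omega⟩
      · exact ⟨c - 1, by omega⟩
  obtain ⟨c, h3⟩ := up (N + k.natAbs) k
  have h5 : |k + (N + k.natAbs : ℕ)| = (k + (N + k.natAbs : ℕ)) := abs_of_nonneg (by omega)
  rw [hN _ (by rw [h5]; omega), h5] at h3
  exact ⟨-c, by omega⟩

theorem exists_of_valid {e : ℤ → ℤ} (h : ValidHt e) : ∃ μ, ht μ = e := by
  have hge := valid_abs_le h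
  have hpar := valid_parity h
  obtain ⟨h1, N, hN⟩ := h
  have key : ∀ a b : ℕ, (a : ℤ) + (b + 1 : ℕ) < e ((b + 1 : ℕ) - (a : ℤ)) →
      (a : ℤ) + b < e (b - a) := by
    intro a b hab
    have h2 := h1 (b - a)
    have : ((b + 1 : ℕ) : ℤ) - a = b - a + 1 := by push_cast; ring
    rw [this] at hab
    omega
  have key' : ∀ a b : ℕ, ((a + 1 : ℕ) : ℤ) + b < e (b - ((a + 1 : ℕ) : ℤ)) →
      (a : ℤ) + b < e (b - a) := by
    intro a b hab
    have h2 := h1 (b - (a + 1 : ℕ))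
    have : (b : ℤ) - (a + 1 : ℕ) + 1 = b - a := by push_cast; ring
    rw [this] at h2
    omega
  have fin : {c : ℕ × ℕ | (c.1 : ℤ) + c.2 < e (c.2 - c.1)}.Finite := by
    -- bounded by the values of `e` near zero
    obtain ⟨B, hB⟩ : ∃ B : ℕ, ∀ k : ℤ, |k| < N → e k ≤ B := by
      refine ⟨(Finset.Icc (-(N : ℤ)) N).sup (fun k => (e k).toNat), fun k hk => ?_⟩
      have := abs_lt.mp hk
      have h4 := Finset.le_sup (f := fun k => (e k).toNat)
        (show k ∈ Finset.Icc (-(N : ℤ)) N by rw [Finset.mem_Icc]; omega)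
      omega
    refine (Finset.finite_toSet (Finset.range (B + 1) ×ˢ Finset.range (B + 1))).subset ?_
    rintro ⟨i, j⟩ hij
    simp only [Set.mem_ofPred_eq] at hij
    simp only [Finset.coe_product, Finset.coe_range, Set.mem_prod, Set.mem_Iio]
    by_cases hk : |(j : ℤ) - i| < N
    · have := hB _ hk
      omega
    · rw [hN _ (not_lt.mp hk)] at hij
      rcases abs_cases ((j : ℤ) - i) with ⟨h1, h2⟩ | ⟨h1, h2⟩ <;> omega
  have lower : IsLowerSet {c : ℕ × ℕ | (c.1 : ℤ) + c.2 < e (c.2 - c.1)} := by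
    have r : ∀ a b m : ℕ, (a : ℤ) + (b + m : ℕ) < e ((b + m : ℕ) - (a : ℤ)) →
        (a : ℤ) + b < e (b - a) := by
      intro a b m
      induction m with
      | zero => intro h; exact h
      | succ m ih => intro h; exact ih (key a (b + m) h)
    have r' : ∀ a b m : ℕ, ((a + m : ℕ) : ℤ) + b < e (b - ((a + m : ℕ) : ℤ)) →
        (a : ℤ) + b < e (b - a) := by
      intro a b m
      induction m with
      | zero => intro h; exact h
      | succ m ih => intro h; exact ih (key' (a + m) b h)
    rintro ⟨i, j⟩ ⟨i', j'⟩ ⟨hi, hj⟩ hm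
    obtain ⟨p, rfl⟩ := Nat.exists_eq_add_of_le hi
    obtain ⟨q, rfl⟩ := Nat.exists_eq_add_of_le hj
    exact r _ _ _ (r' _ _ _ hm)
  refine ⟨⟨fin.toFinset, by simpa using lower⟩, ?_⟩
  funext k
  refine height_unique k _ _ (ht_ge _ _) (hge k) (ht_parity _ _) (hpar k) ?_
  rintro i j rfl
  rw [← mem_iff_ht, ← YoungDiagram.mem_cells]
  simp

/-! ### Domino covers -/

def bump (k x : ℤ) : ℤ := if x = k ∨ x = k + 1 then 2 else 0

def CovAt (k : ℤ) (κ ν : YoungDiagram) : Prop := ∀ x, ht ν x = ht κ x + bump k x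

def Cov (κ ν : YoungDiagram) : Prop := ∃ k, CovAt k κ ν

theorem covAt_dominoes {κ ν : YoungDiagram} {k : ℤ} (h : CovAt k κ ν) :
    ∃ a b : ℕ × ℕ, dominoAdj a b ∧ a ∉ κ.cells ∧ b ∉ κ.cells ∧
      ν.cells = insert a (insert b κ.cells) := by
  obtain ⟨c, hc⟩ := ht_parity κ k
  obtain ⟨c', hc'⟩ := ht_parity κ (k + 1)
  have g := abs_le.mp (ht_ge κ k)
  have g' := abs_le.mp (ht_ge κ (k + 1))
  have st := (ht_valid κ).1 k
  have e1 : (((k + c).toNat : ℕ) : ℤ) - (c.toNat : ℕ) = k := by omega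
  have e2 : (((k + 1 + c').toNat : ℕ) : ℤ) - (c'.toNat : ℕ) = k + 1 := by omega
  refine ⟨(c.toNat, (k + c).toNat), (c'.toNat, (k + 1 + c').toNat), ?_, ?_, ?_, ?_⟩
  · unfold dominoAdj
    simp only
    omega
  · rw [YoungDiagram.mem_cells, mem_iff_ht, e1]
    omega
  · rw [YoungDiagram.mem_cells, mem_iff_ht, e2]
    omega
  · ext ⟨i, j⟩
    simp only [Finset.mem_insert, YoungDiagram.mem_cells, mem_iff_ht, Prod.mk.injEq]
    rw [h]
    unfold bump
    by_cases h1 : (j : ℤ) - i = k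
    · rw [h1]; simp only [true_or, if_true]; omega
    by_cases h2 : (j : ℤ) - i = k + 1
    · rw [h2]; simp only [or_true, if_true]; omega
    simp only [h1, h2, or_self, if_false]
    omega

theorem mem_pred {ν : YoungDiagram} {i j : ℕ} (h : (i + 1, j + 1) ∈ ν) : (i, j) ∈ ν :=
  ν.up_left_mem (Nat.le_succ _) (Nat.le_succ _) h

theorem cov_of_dominoes {κ ν : YoungDiagram} {a b : ℕ × ℕ} (hab : dominoAdj a b)
    (ha : a ∉ κ.cells) (hb : b ∉ κ.cells) (hν : ν.cells = insert a (insert b κ.cells)) :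
    Cov κ ν := by
  wlog hc : (b.2 : ℤ) - b.1 = (a.2 : ℤ) - a.1 + 1 generalizing a b
  · refine this (a := b) (b := a) ?_ hb ha (by rw [hν, Finset.insert_comm]) ?_
    · unfold dominoAdj at *; omega
    · unfold dominoAdj at *; omega
  obtain ⟨a1, a2⟩ := a
  obtain ⟨b1, b2⟩ := b
  simp only at hc
  have hm : ∀ i j : ℕ, (i, j) ∈ ν ↔ (i = a1 ∧ j = a2) ∨ (i = b1 ∧ j = b2) ∨ (i, j) ∈ κ := by
    intro i j
    rw [← YoungDiagram.mem_cells, hν]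
    simp
  -- a new cell alone on its diagonal lies exactly at the height of `κ`
  have tight : ∀ i j : ℕ, (i, j) ∈ ν → (i, j) ∉ κ →
      (∀ p q : ℕ, (p, q) ∈ ν → (p, q) ∉ κ → (q : ℤ) - p = (j : ℤ) - i → p = i ∧ q = j) →
      (i : ℤ) + j = ht κ ((j : ℤ) - i) := by
    intro i j h1 h2 h3
    have h2' := h2
    rw [mem_iff_ht] at h2
    by_contra hne
    obtain ⟨c, hc⟩ := ht_parity κ ((j : ℤ) - i)
    have g := abs_le.mp (ht_ge κ ((j : ℤ) - i))
    obtain ⟨i', rfl⟩ : ∃ i', i = i' + 1 := ⟨i - 1, by omega⟩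
    obtain ⟨j', rfl⟩ : ∃ j', j = j' + 1 := ⟨j - 1, by omega⟩
    have h4 := h3 i' j' (mem_pred h1) (by
      rw [mem_iff_ht]
      have : (j' : ℤ) - i' = ((j' + 1 : ℕ) : ℤ) - ((i' + 1 : ℕ) : ℤ) := by push_cast; ring
      rw [this]; omega) (by push_cast; ring)
    omega
  have ta := tight a1 a2 ((hm _ _).mpr (by simp)) ha (by
    intro p q h1 h2 h3
    rcases (hm p q).mp h1 with h | h | h
    · exact h
    · omega
    · exact absurd h h2)
  have tb := tight b1 b2 ((hm _ _).mpr (by simp)) hb (by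
    intro p q h1 h2 h3
    rcases (hm p q).mp h1 with h | h | h
    · omega
    · exact h
    · exact absurd h h2)
  refine ⟨(a2 : ℤ) - a1, fun x => ?_⟩
  obtain ⟨c, hpc⟩ := ht_parity κ x
  have hge := ht_ge κ x
  refine height_unique x _ _ (ht_ge _ _) ?_ (ht_parity _ _) ?_ ?_
  · unfold bump; split_ifs <;> omega
  · unfold bump
    split_ifs
    · exact ⟨c + 1, by omega⟩
    · exact ⟨c, by omega⟩
  · rintro i j rfl
    rw [← mem_iff_ht, hm, mem_iff_ht]
    unfold bump
    by_cases h1 : (j : ℤ) - i = (a2 : ℤ) - a1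
    · rw [h1] at hpc ⊢; simp only [true_or, if_true]; omega
    by_cases h2 : (j : ℤ) - i = (a2 : ℤ) - a1 + 1
    · rw [hc] at tb
      rw [h2] at hpc ⊢; simp only [or_true, if_true]; omega
    simp only [h1, h2, or_self, if_false]
    omega

theorem covAt_le {κ ν : YoungDiagram} {k : ℤ} (h : CovAt k κ ν) :
    ht κ (k - 1) = ht κ k + 1 ∧ ht κ (k + 2) = ht κ (k + 1) + 1 := by
  have h0 := h k
  have h1 := h (k - 1)
  have h2 := h (k + 1)
  have h3 := h (k + 2)
  have a1 := (ht_valid κ).1 (k - 1)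
  have a2 := (ht_valid κ).1 (k + 1)
  have b1 := (ht_valid ν).1 (k - 1)
  have b2 := (ht_valid ν).1 (k + 1)
  have e1 : k - 1 + 1 = k := by ring
  have e2 : k + 1 + 1 = k + 2 := by ring
  rw [e1] at a1 b1
  rw [e2] at a2 b2
  unfold bump at *
  simp at h0 h1 h2 h3
  omega

theorem valid_add {e : ℤ → ℤ} (h : ValidHt e) {k : ℤ} (h1 : e (k - 1) = e k + 1)
    (h2 : e (k + 2) = e (k + 1) + 1) : ValidHt (fun x => e x + bump k x) := by
  obtain ⟨s, N, hN⟩ := h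
  refine ⟨fun x => ?_, N + k.natAbs + 2, fun x hx => ?_⟩
  · have := s x
    by_cases c1 : x = k - 1
    · subst c1; simp only [bump]
      rw [sub_add_cancel] at *
      simp; omega
    by_cases c2 : x = k + 1
    · subst c2; simp only [bump]
      have e2 : k + 1 + 1 = k + 2 := by ring
      rw [e2] at *
      simp; omega
    have hb : bump k (x + 1) = bump k x := by
      unfold bump
      split_ifs <;> omega
    simp only [hb]; omega
  · have hb : bump k x = 0 := by
      unfold bump
      rw [if_neg]
      rcases abs_cases x with ⟨h1, h2⟩ | ⟨h1, h2⟩ <;> omega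
    simp only [hb, add_zero]
    exact hN x (by omega)

theorem valid_sub {e : ℤ → ℤ} (h : ValidHt e) {k : ℤ} (h1 : e (k - 1) = e k - 1)
    (h2 : e (k + 2) = e (k + 1) - 1) : ValidHt (fun x => e x - bump k x) := by
  obtain ⟨s, N, hN⟩ := h
  refine ⟨fun x => ?_, N + k.natAbs + 2, fun x hx => ?_⟩
  · have := s x
    by_cases c1 : x = k - 1
    · subst c1; simp only [bump]
      rw [sub_add_cancel] at *
      simp; omega
    by_cases c2 : x = k + 1
    · subst c2; simp only [bump]
      have e2 : k + 1 + 1 = k + 2 := by ring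
      rw [e2] at *
      simp; omega
    have hb : bump k (x + 1) = bump k x := by
      unfold bump
      split_ifs <;> omega
    simp only [hb]; omega
  · have hb : bump k x = 0 := by
      unfold bump
      rw [if_neg]
      rcases abs_cases x with ⟨h1, h2⟩ | ⟨h1, h2⟩ <;> omega
    simp only [hb, sub_zero]
    exact hN x (by omega)

theorem exists_covAt_up {κ : YoungDiagram} {k : ℤ} :
    (∃ ν, CovAt k κ ν) ↔ (ht κ (k - 1) = ht κ k + 1 ∧ ht κ (k + 2) = ht κ (k + 1) + 1) := by
  constructor
  · rintro ⟨ν, h⟩; exact covAt_le h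
  · rintro ⟨h1, h2⟩
    obtain ⟨ν, hν⟩ := exists_of_valid (valid_add (ht_valid κ) h1 h2)
    exact ⟨ν, fun x => by rw [hν]⟩

theorem covAt_ge {κ ν : YoungDiagram} {k : ℤ} (h : CovAt k κ ν) :
    ht ν (k - 1) = ht ν k - 1 ∧ ht ν (k + 2) = ht ν (k + 1) - 1 := by
  have g := covAt_le h
  have h0 := h k
  have h1 := h (k - 1)
  have h2 := h (k + 1)
  have h3 := h (k + 2)
  unfold bump at *
  simp at h0 h1 h2 h3
  omega

theorem exists_covAt_down {ν : YoungDiagram} {k : ℤ} :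
    (∃ κ, CovAt k κ ν) ↔ (ht ν (k - 1) = ht ν k - 1 ∧ ht ν (k + 2) = ht ν (k + 1) - 1) := by
  constructor
  · rintro ⟨κ, h⟩; exact covAt_ge h
  · rintro ⟨h1, h2⟩
    obtain ⟨κ, hκ⟩ := exists_of_valid (valid_sub (ht_valid ν) h1 h2)
    exact ⟨κ, fun x => by rw [hκ]; simp⟩

theorem bump_inj {k l : ℤ} (h : ∀ x, bump k x = bump l x) : k = l := by
  have h1 := h k
  have h2 := h l
  unfold bump at h1 h2
  simp at h1 h2
  omega

theorem covAt_right_unique {k : ℤ} {κ ν ν' : YoungDiagram} (h : CovAt k κ ν) (h' : CovAt k κ ν') :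
    ν = ν' := ht_injective (funext fun x => by rw [h, h'])

theorem covAt_left_unique {k : ℤ} {κ κ' ν : YoungDiagram} (h : CovAt k κ ν) (h' : CovAt k κ' ν) :
    κ = κ' := ht_injective (funext fun x => by have := h x; have := h' x; omega)

theorem covAt_index_unique {k l : ℤ} {κ ν : YoungDiagram} (h : CovAt k κ ν) (h' : CovAt l κ ν) :
    k = l := bump_inj fun x => by have := h x; have := h' x; omega

/-- For distinct diagrams, a common upper cover gives a common lower cover. -/
theorem exists_lower {lam lam' ν : YoungDiagram} (hne : lam ≠ lam') (h : Cov lam ν)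
    (h' : Cov lam' ν) : ∃ κ, (Cov κ lam ∧ Cov κ lam') ∧ ∀ x, ht κ x = ht lam x + ht lam' x - ht ν x := by
  obtain ⟨k, hk⟩ := h
  obtain ⟨l, hl⟩ := h'
  have hkl : k ≠ l := by
    rintro rfl
    exact hne (covAt_left_unique hk hl)
  have hl' := covAt_ge hl
  have hk' := covAt_le hk
  have a1 := hk (l - 1)
  have a2 := hk l
  have a3 := hk (l + 1)
  have a4 := hk (l + 2)
  have s1 := (ht_valid lam).1 (l - 1)
  have s2 := (ht_valid lam).1 (l + 1)
  have e1 : l - 1 + 1 = l := by ring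
  have e2 : l + 1 + 1 = l + 2 := by ring
  rw [e1] at s1
  rw [e2] at s2
  have key : ht lam (l - 1) = ht lam l - 1 ∧ ht lam (l + 2) = ht lam (l + 1) - 1 := by
    unfold bump at *
    by_cases c1 : l = k + 1
    · subst c1
      simp at *
      split_ifs at * <;> omega
    by_cases c2 : l = k - 1
    · subst c2
      simp at *
      split_ifs at * <;> omega
    split_ifs at * <;> omega
  obtain ⟨κ, hκ⟩ := exists_covAt_down.mpr key
  have hx : ∀ x, ht κ x = ht lam x + ht lam' x - ht ν x := fun x => by
    have := hκ x; have := hl x; omega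
  refine ⟨κ, ⟨⟨l, hκ⟩, ⟨k, fun x => ?_⟩⟩, hx⟩
  have := hx x
  have := hk x
  omega

theorem exists_upper {lam lam' κ : YoungDiagram} (hne : lam ≠ lam') (h : Cov κ lam)
    (h' : Cov κ lam') : ∃ ν, (Cov lam ν ∧ Cov lam' ν) ∧ ∀ x, ht ν x = ht lam x + ht lam' x - ht κ x := by
  obtain ⟨k, hk⟩ := h
  obtain ⟨l, hl⟩ := h'
  have hkl : k ≠ l := by
    rintro rfl
    exact hne (covAt_right_unique hk hl)
  have hl' := covAt_le hl
  have hk' := covAt_ge hk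
  have a1 := hk (l - 1)
  have a2 := hk l
  have a3 := hk (l + 1)
  have a4 := hk (l + 2)
  have s1 := (ht_valid lam).1 (l - 1)
  have s2 := (ht_valid lam).1 (l + 1)
  have e1 : l - 1 + 1 = l := by ring
  have e2 : l + 1 + 1 = l + 2 := by ring
  rw [e1] at s1
  rw [e2] at s2
  have key : ht lam (l - 1) = ht lam l + 1 ∧ ht lam (l + 2) = ht lam (l + 1) + 1 := by
    unfold bump at *
    by_cases c1 : l = k + 1
    · subst c1
      simp at *
      split_ifs at * <;> omega
    by_cases c2 : l = k - 1
    · subst c2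
      simp at *
      split_ifs at * <;> omega
    split_ifs at * <;> omega
  obtain ⟨ν, hν⟩ := exists_covAt_up.mpr key
  have hx : ∀ x, ht ν x = ht lam x + ht lam' x - ht κ x := fun x => by
    have := hν x; have := hl x; omega
  refine ⟨ν, ⟨⟨l, hν⟩, ⟨k, fun x => ?_⟩⟩, hx⟩
  have := hx x
  have := hk x
  omega

theorem equiv_of_ne {lam lam' : YoungDiagram} (hne : lam ≠ lam') :
    Nonempty ({ν // Cov lam ν ∧ Cov lam' ν} ≃ {κ // Cov κ lam ∧ Cov κ lam'}) := by
  choose f hf hf' using fun ν : {ν // Cov lam ν ∧ Cov lam' ν} => exists_lower hne ν.2.1 ν.2.2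
  choose g hg hg' using fun κ : {κ // Cov κ lam ∧ Cov κ lam'} => exists_upper hne κ.2.1 κ.2.2
  refine ⟨⟨fun ν => ⟨f ν, hf ν⟩, fun κ => ⟨g κ, hg κ⟩, fun ν => ?_, fun κ => ?_⟩⟩
  · apply Subtype.ext
    apply ht_injective
    funext x
    simp only [hf', hg']
    ring
  · apply Subtype.ext
    apply ht_injective
    funext x
    simp only [hf', hg']
    ring

def IsUp (μ : YoungDiagram) (k : ℤ) : Prop :=
  ht μ (k - 1) = ht μ k + 1 ∧ ht μ (k + 2) = ht μ (k + 1) + 1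

def IsDown (μ : YoungDiagram) (k : ℤ) : Prop :=
  ht μ (k - 1) = ht μ k - 1 ∧ ht μ (k + 2) = ht μ (k + 1) - 1

theorem up_equiv (μ : YoungDiagram) : Nonempty ({ν // Cov μ ν} ≃ {k // IsUp μ k}) := by
  choose f hf using fun ν : {ν // Cov μ ν} => ν.2
  choose g hg using fun k : {k // IsUp μ k} => exists_covAt_up.mpr k.2
  exact ⟨⟨fun ν => ⟨f ν, covAt_le (hf ν)⟩, fun k => ⟨g k, k.1, hg k⟩,
    fun ν => Subtype.ext (covAt_right_unique (hg _) (hf ν)),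
    fun k => Subtype.ext (covAt_index_unique (hf ⟨g k, k.1, hg k⟩) (hg k))⟩⟩

theorem down_equiv (μ : YoungDiagram) : Nonempty ({κ // Cov κ μ} ≃ {k // IsDown μ k}) := by
  choose f hf using fun κ : {κ // Cov κ μ} => κ.2
  choose g hg using fun k : {k // IsDown μ k} => exists_covAt_down.mpr k.2
  exact ⟨⟨fun κ => ⟨f κ, covAt_ge (hf κ)⟩, fun k => ⟨g k, k.1, hg k⟩,
    fun κ => Subtype.ext (covAt_left_unique (hg _) (hf κ)),
    fun k => Subtype.ext (covAt_index_unique (hf ⟨g k, k.1, hg k⟩) (hg k))⟩⟩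

theorem telescope_two (f : ℕ → ℤ) (M : ℕ) :
    ∑ i ∈ Finset.range M, (f (i + 2) - f i) = f (M + 1) + f M - f 1 - f 0 := by
  induction M with
  | zero => simp
  | succ m ih => rw [Finset.sum_range_succ, ih]; ring_nf

theorem up_down_equiv (μ : YoungDiagram) :
    Nonempty ({k // IsUp μ k} ≃ {k // IsDown μ k} ⊕ Fin 2) := by
  obtain ⟨s, N, hN⟩ := ht_valid μ
  have hpos : ∀ x : ℤ, (N : ℤ) ≤ x → ht μ x = x := fun x hx => by
    rw [hN x (by rw [abs_of_nonneg (by omega)]; exact hx), abs_of_nonneg (by omega)]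
  have hneg : ∀ x : ℤ, x ≤ -(N : ℤ) → ht μ x = -x := fun x hx => by
    rw [hN x (by rw [abs_of_nonpos (by omega)]; omega), abs_of_nonpos (by omega)]
  let σ : ℕ → ℤ := fun i => (i : ℤ) - (N + 3 : ℕ)
  let M := 2 * N + 6
  let A := (Finset.range M).filter (fun i => IsUp μ (σ i))
  let B := (Finset.range M).filter (fun i => IsDown μ (σ i))
  have hσ : Function.Injective σ := fun a b h => by simp only [σ] at h; omega
  have bound : ∀ k, IsUp μ k ∨ IsDown μ k → -(N + 3 : ℤ) ≤ k ∧ k < N + 3 := by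
    intro k hk
    by_contra hcon
    unfold IsUp IsDown at hk
    by_cases h : k < 0
    · rw [hneg (k - 1) (by omega), hneg k (by omega), hneg (k + 1) (by omega),
        hneg (k + 2) (by omega)] at hk
      omega
    · rw [hpos (k - 1) (by omega), hpos k (by omega), hpos (k + 1) (by omega),
        hpos (k + 2) (by omega)] at hk
      omega
  have cardEq : ∀ P : ℤ → Prop, (∀ k, P k → -(N + 3 : ℤ) ≤ k ∧ k < N + 3) →
      Nonempty (((Finset.range M).filter (fun i => P (σ i))) ≃ {k // P k}) := by
    intro P hP
    refine ⟨Equiv.ofBijective (fun i => ⟨σ i.1, (Finset.mem_filter.mp i.2).2⟩) ⟨?_, ?_⟩⟩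
    · intro a b hab
      exact Subtype.ext (hσ (Subtype.ext_iff.mp hab))
    · rintro ⟨k, hk⟩
      have := hP k hk
      have e : σ (k + (N + 3 : ℕ)).toNat = k := by simp only [σ]; omega
      refine ⟨⟨(k + (N + 3 : ℕ)).toNat, ?_⟩, Subtype.ext e⟩
      rw [Finset.mem_filter, Finset.mem_range, e]
      exact ⟨by simp only [M]; omega, hk⟩
  obtain ⟨eA⟩ := cardEq (IsUp μ) (fun k hk => bound k (Or.inl hk))
  obtain ⟨eB⟩ := cardEq (IsDown μ) (fun k hk => bound k (Or.inr hk))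
  -- the telescoping count
  let t : ℕ → ℤ := fun i => ht μ (σ i) - ht μ (σ i - 1)
  have hsum := telescope_two t M
  have hterm : ∀ i ∈ Finset.range M, t (i + 2) - t i =
      2 * (if IsUp μ (σ i) then 1 else 0) - 2 * (if IsDown μ (σ i) then 1 else 0) := by
    intro i _
    have e1 : σ (i + 2) = σ i + 2 := by simp only [σ]; push_cast; ring
    have e2 : σ i + 2 - 1 = σ i + 1 := by ring
    simp only [t, e1, e2]
    have s1 := s (σ i - 1)
    have s2 := s (σ i + 1)
    have e3 : σ i - 1 + 1 = σ i := by ring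
    have e4 : σ i + 1 + 1 = σ i + 2 := by ring
    rw [e3] at s1
    rw [e4] at s2
    unfold IsUp IsDown
    split_ifs <;> omega
  rw [Finset.sum_congr rfl hterm, Finset.sum_sub_distrib, ← Finset.mul_sum, ← Finset.mul_sum,
    Finset.sum_boole, Finset.sum_boole] at hsum
  have t1 : t (M + 1) = 1 := by
    simp only [t, σ, M]
    rw [hpos _ (by push_cast; omega), hpos _ (by push_cast; omega)]; ring
  have t2 : t M = 1 := by
    simp only [t, σ, M]
    rw [hpos _ (by push_cast; omega), hpos _ (by push_cast; omega)]; ring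
  have t3 : t 1 = -1 := by
    simp only [t, σ]
    rw [hneg _ (by push_cast; omega), hneg _ (by push_cast; omega)]; ring
  have t4 : t 0 = -1 := by
    simp only [t, σ]
    rw [hneg _ (by push_cast; omega), hneg _ (by push_cast; omega)]; ring
  rw [t1, t2, t3, t4] at hsum
  have hAB : A.card = B.card + 2 := by
    have : (A.card : ℤ) = B.card + 2 := by
      simp only [A, B]
      linarith
    exact_mod_cast this
  have e : A ≃ B ⊕ Fin 2 := Fintype.equivOfCardEq (by simp [hAB])
  exact ⟨eA.symm.trans (e.trans (Equiv.sumCongr eB (Equiv.refl _)))⟩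

theorem equiv_local (lam lam' : YoungDiagram) :
    Nonempty ({ν // Cov lam ν ∧ Cov lam' ν} ≃
      {κ // Cov κ lam ∧ Cov κ lam'} ⊕ {_x : Fin 2 // lam' = lam}) := by
  by_cases h : lam' = lam
  · subst h
    obtain ⟨a⟩ := up_equiv lam'
    obtain ⟨b⟩ := down_equiv lam'
    obtain ⟨c⟩ := up_down_equiv lam'
    have e1 : {ν // Cov lam' ν ∧ Cov lam' ν} ≃ {ν // Cov lam' ν} :=
      Equiv.subtypeEquivRight (fun _ => and_self_iff)
    have e2 : {κ // Cov κ lam' ∧ Cov κ lam'} ≃ {κ // Cov κ lam'} :=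
      Equiv.subtypeEquivRight (fun _ => and_self_iff)
    have e3 : {_x : Fin 2 // lam' = lam'} ≃ Fin 2 := Equiv.subtypeUnivEquiv (fun _ => rfl)
    exact ⟨e1.trans (a.trans (c.trans (Equiv.sumCongr (b.symm.trans e2.symm) e3.symm)))⟩
  · obtain ⟨a⟩ := equiv_of_ne (Ne.symm h)
    have : IsEmpty {_x : Fin 2 // lam' = lam} := ⟨fun x => h x.2⟩
    exact ⟨a.trans (Equiv.sumEmpty _ _).symm⟩

/-- The commutation relation `DU = UD + 2` at the level of types. -/
theorem commutation (T : YoungDiagram → Type) (lam : YoungDiagram) :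
    Nonempty ((Σ ν : {ν // Cov lam ν}, Σ lam' : {lam' // Cov lam' ν.1}, T lam'.1) ≃
      (Σ κ : {κ // Cov κ lam}, Σ lam' : {lam' // Cov κ.1 lam'}, T lam'.1) ⊕ (Fin 2 × T lam)) := by
  have eq := fun lam' => Classical.choice (equiv_local lam lam')
  have e1 : (Σ ν : {ν // Cov lam ν}, Σ lam' : {lam' // Cov lam' ν.1}, T lam'.1) ≃
      Σ lam' : YoungDiagram, {ν // Cov lam ν ∧ Cov lam' ν} × T lam' :=
    ⟨fun x => ⟨x.2.1.1, ⟨x.1.1, x.1.2, x.2.1.2⟩, x.2.2⟩,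
     fun x => ⟨⟨x.2.1.1, x.2.1.2.1⟩, ⟨x.1, x.2.1.2.2⟩, x.2.2⟩, fun _ => rfl, fun _ => rfl⟩
  have e2 : (Σ κ : {κ // Cov κ lam}, Σ lam' : {lam' // Cov κ.1 lam'}, T lam'.1) ≃
      Σ lam' : YoungDiagram, {κ // Cov κ lam ∧ Cov κ lam'} × T lam' :=
    ⟨fun x => ⟨x.2.1.1, ⟨x.1.1, x.1.2, x.2.1.2⟩, x.2.2⟩,
     fun x => ⟨⟨x.2.1.1, x.2.1.2.1⟩, ⟨x.1, x.2.1.2.2⟩, x.2.2⟩, fun _ => rfl, fun _ => rfl⟩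
  have e3 : (Σ lam' : YoungDiagram, {_x : Fin 2 // lam' = lam} × T lam') ≃ Fin 2 × T lam :=
    { toFun := fun x => (x.2.1.1, x.2.1.2 ▸ x.2.2)
      invFun := fun y => ⟨lam, ⟨y.1, rfl⟩, y.2⟩
      left_inv := by
        rintro ⟨lam', ⟨x, rfl⟩, y⟩
        rfl
      right_inv := fun _ => rfl }
  refine ⟨e1.trans ((Equiv.sigmaCongrRight fun lam' =>
    ((eq lam').prodCongr (Equiv.refl (T lam'))).trans (Equiv.sumProdDistrib _ _ _)).trans
    ((Equiv.sigmaSumDistrib _ _).trans (Equiv.sumCongr e2.symm e3)))⟩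

/-- Iterating the commutation relation for a graded family satisfying the branching rule. -/
theorem down_step (T : ℕ → YoungDiagram → Type)
    (h0 : ∀ κ lam, Cov κ lam → IsEmpty (T 0 lam))
    (hs : ∀ n ν, Nonempty (T (n + 1) ν ≃ Σ κ : {κ // Cov κ ν}, T n κ.1)) (n : ℕ) :
    ∀ lam, Nonempty ((Σ ν : {ν // Cov lam ν}, T (n + 1) ν.1) ≃ Fin (2 * (n + 1)) × T n lam) := by
  have B := fun n ν => Classical.choice (hs n ν)
  induction n with
  | zero =>
    intro lam
    obtain ⟨c⟩ := commutation (T 0) lam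
    have : IsEmpty (Σ κ : {κ // Cov κ lam}, Σ lam' : {lam' // Cov κ.1 lam'}, T 0 lam'.1) :=
      ⟨fun x => (h0 _ _ x.2.1.2).false x.2.2⟩
    have e0 : (Σ ν : {ν // Cov lam ν}, T (0 + 1) ν.1) ≃
        Σ ν : {ν // Cov lam ν}, Σ lam' : {lam' // Cov lam' ν.1}, T 0 lam'.1 :=
      Equiv.sigmaCongrRight fun ν => B 0 ν.1
    have e1 : Fin 2 ≃ Fin (2 * (0 + 1)) := finCongr (by norm_num)
    exact ⟨e0.trans (c.trans
      ((Equiv.emptySum _ _).trans (e1.prodCongr (Equiv.refl _))))⟩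
  | succ n ih =>
    intro lam
    obtain ⟨c⟩ := commutation (T (n + 1)) lam
    have I := fun lam => Classical.choice (ih lam)
    have a1 : (Σ κ : {κ // Cov κ lam}, Σ lam' : {lam' // Cov κ.1 lam'}, T (n + 1) lam'.1) ≃
        Σ κ : {κ // Cov κ lam}, Fin (2 * (n + 1)) × T n κ.1 :=
      Equiv.sigmaCongrRight fun κ => I κ.1
    have a2 : (Σ κ : {κ // Cov κ lam}, Fin (2 * (n + 1)) × T n κ.1) ≃
        Fin (2 * (n + 1)) × Σ κ : {κ // Cov κ lam}, T n κ.1 :=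
      { toFun := fun x => (x.2.1, ⟨x.1, x.2.2⟩)
        invFun := fun x => ⟨x.2.1, x.1, x.2.2⟩
        left_inv := fun _ => rfl
        right_inv := fun _ => rfl }
    have a3 : (Fin (2 * (n + 1)) × Σ κ : {κ // Cov κ lam}, T n κ.1) ≃
        Fin (2 * (n + 1)) × T (n + 1) lam := (Equiv.refl _).prodCongr (B n lam).symm
    have e0 : (Σ ν : {ν // Cov lam ν}, T (n + 1 + 1) ν.1) ≃
        Σ ν : {ν // Cov lam ν}, Σ lam' : {lam' // Cov lam' ν.1}, T (n + 1) lam'.1 :=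
      Equiv.sigmaCongrRight fun ν => B (n + 1) ν.1
    have e2 : Fin (2 * (n + 1)) ⊕ Fin 2 ≃ Fin (2 * (n + 1 + 1)) := finSumFinEquiv
    have e4 : (Fin (2 * (n + 1)) × T (n + 1) lam) ⊕ (Fin 2 × T (n + 1) lam) ≃
        Fin (2 * (n + 1 + 1)) × T (n + 1) lam :=
      (Equiv.sumProdDistrib _ _ _).symm.trans (e2.prodCongr (Equiv.refl _))
    exact ⟨e0.trans (c.trans ((Equiv.sumCongr (a1.trans (a2.trans a3)) (Equiv.refl _)).trans e4))⟩

theorem pair_step (T : ℕ → YoungDiagram → Type)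
    (h0 : ∀ κ lam, Cov κ lam → IsEmpty (T 0 lam))
    (hs : ∀ n ν, Nonempty (T (n + 1) ν ≃ Σ κ : {κ // Cov κ ν}, T n κ.1)) (n : ℕ) :
    Nonempty ((Σ ν, T (n + 1) ν × T (n + 1) ν) ≃ Fin (2 * (n + 1)) × Σ κ, T n κ × T n κ) := by
  have B := fun ν => Classical.choice (hs n ν)
  have I := fun lam => Classical.choice (down_step T h0 hs n lam)
  have e1 : (Σ ν, T (n + 1) ν × Σ κ : {κ // Cov κ ν}, T n κ.1) ≃
      Σ κ, (Σ ν : {ν // Cov κ ν}, T (n + 1) ν.1) × T n κ :=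
    ⟨fun x => ⟨x.2.2.1.1, ⟨⟨x.1, x.2.2.1.2⟩, x.2.1⟩, x.2.2.2⟩,
      fun x => ⟨x.2.1.1.1, x.2.1.2, ⟨⟨x.1, x.2.1.1.2⟩, x.2.2⟩⟩, fun _ => rfl, fun _ => rfl⟩
  have e2 : (Σ κ, (Fin (2 * (n + 1)) × T n κ) × T n κ) ≃
      Fin (2 * (n + 1)) × Σ κ, T n κ × T n κ :=
    ⟨fun x => (x.2.1.1, ⟨x.1, x.2.1.2, x.2.2⟩), fun x => ⟨x.2.1, (x.1, x.2.2.1), x.2.2.2⟩,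
      fun _ => rfl, fun _ => rfl⟩
  exact ⟨(Equiv.sigmaCongrRight fun ν => (Equiv.refl _).prodCongr (B ν)).trans
    (e1.trans ((Equiv.sigmaCongrRight fun κ => (I κ).prodCongr (Equiv.refl _)).trans e2))⟩

/-! ### Branching rule for standard domino tableaux -/

theorem dominoAdj_ne {c d : ℕ × ℕ} (h : dominoAdj c d) : d ≠ c := by
  rintro rfl
  unfold dominoAdj at h
  omega

theorem dominoAdj_symm {c d : ℕ × ℕ} (h : dominoAdj c d) : dominoAdj d c := by
  unfold dominoAdj at *
  omega

theorem sdt_ext {μ : YoungDiagram} {n : ℕ} {x y : SDT μ n} (h : ∀ c, x.1.2 c = y.1.2 c) :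
    x = y := by
  obtain ⟨⟨t, l⟩, ⟨⟨t1, t2⟩, hc, ho, hr, hcol⟩, hrange, hcount⟩ := x
  obtain ⟨⟨t', l'⟩, ⟨⟨t1', t2'⟩, hc', ho', hr', hcol'⟩, hrange', hcount'⟩ := y
  obtain rfl : l = l' := funext h
  dsimp only at t1 t2 hc ho hr hcol hrange hcount t1' t2' hc' hrange'
  have : t = t' := by
    funext c
    by_cases hm : c ∈ μ.cells
    · obtain ⟨a, b, hab, hfil⟩ := Finset.card_eq_two.mp
        (hcount (l c) (hrange c hm).1 (hrange c hm).2)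
      have m : ∀ d, d ∈ μ.cells → l d = l c → d = a ∨ d = b := by
        intro d hd hl
        have : d ∈ μ.cells.filter (fun c' => l c' = l c) := by simp [hl, hd]
        rw [hfil] at this
        simpa using this
      have m0 := m c hm rfl
      have m1 := m (t c) (t1 c hm).1 (hc c hm)
      have m2 := m (t' c) (t1' c hm).1 (hc' c hm)
      have n1 := dominoAdj_ne (t1 c hm).2.2
      have n2 := dominoAdj_ne (t1' c hm).2.2
      rcases m0 with m0 | m0 <;> rcases m1 with m1 | m1 <;> rcases m2 with m2 | m2 <;>
        simp_all
    · rw [t2 c hm, t2' c hm]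
  subst this
  rfl

theorem lower_of_steps (S : Set (ℕ × ℕ)) (h1 : ∀ a b : ℕ, (a, b + 1) ∈ S → (a, b) ∈ S)
    (h2 : ∀ a b : ℕ, (a + 1, b) ∈ S → (a, b) ∈ S) : IsLowerSet S := by
  have r : ∀ a b m : ℕ, (a, b + m) ∈ S → (a, b) ∈ S := by
    intro a b m
    induction m with
    | zero => intro h; exact h
    | succ m ih => intro h; exact ih (h1 _ _ h)
  have r' : ∀ a b m : ℕ, (a + m, b) ∈ S → (a, b) ∈ S := by
    intro a b m
    induction m with
    | zero => intro h; exact h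
    | succ m ih => intro h; exact ih (h2 _ _ h)
  rintro ⟨i, j⟩ ⟨i', j'⟩ ⟨hi, hj⟩ hm
  obtain ⟨p, rfl⟩ := Nat.exists_eq_add_of_le hi
  obtain ⟨q, rfl⟩ := Nat.exists_eq_add_of_le hj
  exact r _ _ _ (r' _ _ _ hm)

abbrev Branch (n : ℕ) (ν : YoungDiagram) : Type := Σ κ : {κ // Cov κ ν}, SDT κ.1 n

theorem branch_ext {n : ℕ} {ν : YoungDiagram} {p q : Branch n ν}
    (h : ∀ c, c ∈ p.1.1.cells ↔ c ∈ q.1.1.cells) (h' : ∀ c, p.2.1.2 c = q.2.1.2 c) : p = q := by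
  obtain ⟨⟨κ, hκ⟩, x⟩ := p
  obtain ⟨⟨κ', hκ'⟩, y⟩ := q
  obtain rfl : κ = κ' := YoungDiagram.ext (Finset.ext h)
  obtain rfl : x = y := sdt_ext h'
  rfl

theorem exists_restrict {n : ℕ} {ν : YoungDiagram} (y : SDT ν (n + 1)) :
    ∃ p : Branch n ν, (∀ c, c ∈ p.1.1.cells ↔ c ∈ ν.cells ∧ y.1.2 c ≤ n) ∧
      ∀ c, p.2.1.2 c = if c ∈ p.1.1.cells then y.1.2 c else 0 := by
  obtain ⟨⟨t, l⟩, ⟨⟨t1, t2⟩, hc, ho, hr, hcol⟩, hrange, hcount⟩ := y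
  dsimp only at t1 t2 hc ho hr hcol hrange hcount ⊢
  have lower : IsLowerSet ((ν.cells.filter fun c => l c ≤ n : Finset (ℕ × ℕ)) : Set (ℕ × ℕ)) := by
    apply lower_of_steps
    · intro a b h
      simp only [Finset.coe_filter, Set.mem_ofPred_eq] at h ⊢
      have hm : (a, b) ∈ ν.cells := ν.up_left_mem le_rfl (Nat.le_succ _) h.1
      exact ⟨hm, (hr a b hm h.1).trans h.2⟩
    · intro a b h
      simp only [Finset.coe_filter, Set.mem_ofPred_eq] at h ⊢
      have hm : (a, b) ∈ ν.cells := ν.up_left_mem (Nat.le_succ _) le_rfl h.1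
      refine ⟨hm, ?_⟩
      by_cases ht : t (a, b) = (a + 1, b)
      · rw [← hc (a, b) hm, ht]; exact h.2
      · exact (hcol a b hm h.1 ht).le.trans h.2
  let κ : YoungDiagram := ⟨ν.cells.filter fun c => l c ≤ n, lower⟩
  have hκ : ∀ c, c ∈ κ.cells ↔ c ∈ ν.cells ∧ l c ≤ n := fun c => by simp [κ]
  have hcov : Cov κ ν := by
    obtain ⟨a, b, hab, hfil⟩ := Finset.card_eq_two.mp (hcount (n + 1) (by omega) le_rfl)
    have m : ∀ d, (d ∈ ν.cells ∧ l d = n + 1) ↔ d = a ∨ d = b := by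
      intro d
      rw [← Finset.mem_filter (p := fun d => l d = n + 1), hfil]
      simp
    obtain ⟨ha, hla⟩ := (m a).mpr (Or.inl rfl)
    obtain ⟨hb, hlb⟩ := (m b).mpr (Or.inr rfl)
    have hta := (m (t a)).mp ⟨(t1 a ha).1, by rw [hc a ha, hla]⟩
    have hadj := (t1 a ha).2.2
    rw [hta.resolve_left (dominoAdj_ne hadj)] at hadj
    refine cov_of_dominoes hadj ?_ ?_ ?_
    · rw [hκ]; omega
    · rw [hκ]; omega
    · ext c
      rw [Finset.mem_insert, Finset.mem_insert, hκ, ← or_assoc, ← m c]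
      constructor
      · intro h
        have := hrange c h
        by_cases h1 : l c ≤ n
        · exact Or.inr ⟨h, h1⟩
        · exact Or.inl ⟨h, by omega⟩
      · rintro (h | h) <;> exact h.1
  have hsub : ∀ c, c ∈ κ.cells → c ∈ ν.cells := fun c h => ((hκ c).mp h).1
  have htk : ∀ c, c ∈ κ.cells → t c ∈ κ.cells := by
    intro c h
    rw [hκ] at h ⊢
    exact ⟨(t1 c h.1).1, by rw [hc c h.1]; exact h.2⟩
  refine ⟨⟨⟨κ, hcov⟩, ⟨(fun c => if c ∈ κ.cells then t c else c,
    fun c => if c ∈ κ.cells then l c else 0), ?_⟩⟩, hκ, fun c => rfl⟩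
  refine ⟨⟨⟨?_, ?_⟩, ?_, ?_, ?_, ?_⟩, ?_, ?_⟩
  · intro c h
    simp only [if_pos h, if_pos (htk c h)]
    exact ⟨htk c h, (t1 c (hsub c h)).2⟩
  · intro c h
    simp only [if_neg h]
  · intro c h
    simp only [if_pos h, if_pos (htk c h)]
    exact hc c (hsub c h)
  · intro c h
    simp only [if_neg h]
  · intro i j h h'
    simp only [if_pos h, if_pos h']
    exact hr i j (hsub _ h) (hsub _ h')
  · intro i j h h'
    simp only [if_pos h, if_pos h']
    exact hcol i j (hsub _ h) (hsub _ h')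
  · intro c h
    simp only [if_pos h]
    exact ⟨(hrange c (hsub c h)).1, ((hκ c).mp h).2⟩
  · intro k hk hkn
    rw [← hcount k hk (by omega)]
    congr 1
    ext c
    simp only [Finset.mem_filter]
    constructor
    · rintro ⟨h, h'⟩
      rw [if_pos h] at h'
      exact ⟨hsub c h, h'⟩
    · rintro ⟨h, h'⟩
      have : c ∈ κ.cells := (hκ c).mpr ⟨h, by omega⟩
      rw [if_pos this]
      exact ⟨this, h'⟩

theorem exists_extend {n : ℕ} {ν : YoungDiagram} (p : Branch n ν) :
    ∃ y : SDT ν (n + 1), ∀ c, y.1.2 c =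
      if c ∈ p.1.1.cells then p.2.1.2 c else if c ∈ ν.cells then n + 1 else 0 := by
  obtain ⟨⟨κ, k, hk⟩, ⟨⟨t, l⟩, ⟨⟨t1, t2⟩, hc, ho, hr, hcol⟩, hrange, hcount⟩⟩ := p
  dsimp only at t1 t2 hc ho hr hcol hrange hcount ⊢
  obtain ⟨a, b, hadj, ha, hb, hν⟩ := covAt_dominoes hk
  have hab := dominoAdj_ne hadj
  have hm : ∀ c, c ∈ ν.cells ↔ c = a ∨ c = b ∨ c ∈ κ.cells := by
    intro c; rw [hν]; simp
  have hsub : ∀ c, c ∈ κ.cells → c ∈ ν.cells := fun c h => (hm c).mpr (Or.inr (Or.inr h))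
  let T : ℕ × ℕ → ℕ × ℕ := fun c => if c = a then b else if c = b then a else t c
  let L : ℕ × ℕ → ℕ := fun c => if c ∈ κ.cells then l c else if c ∈ ν.cells then n + 1 else 0
  have Ta : T a = b := by simp [T]
  have Tb : T b = a := by simp [T, hab]
  have Tk : ∀ c, c ∈ κ.cells → T c = t c := by
    intro c h
    have h1 : c ≠ a := fun e => ha (e ▸ h)
    have h2 : c ≠ b := fun e => hb (e ▸ h)
    simp [T, h1, h2]
  have hav : a ∈ ν.cells := (hm a).mpr (Or.inl rfl)
  have hbv : b ∈ ν.cells := (hm b).mpr (Or.inr (Or.inl rfl))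
  have La : L a = n + 1 := by simp only [L]; rw [if_neg ha, if_pos hav]
  have Lb : L b = n + 1 := by simp only [L]; rw [if_neg hb, if_pos hbv]
  have Lk : ∀ c, c ∈ κ.cells → L c = l c := fun c h => by simp only [L]; rw [if_pos h]
  have Lr : ∀ c, c ∈ ν.cells → 1 ≤ L c ∧ L c ≤ n + 1 := by
    intro c h
    rcases (hm c).mp h with rfl | rfl | h'
    · omega
    · omega
    · have := hrange c h'
      rw [Lk c h']; omega
  have Ln : ∀ c, c ∈ ν.cells → (L c ≤ n ↔ c ∈ κ.cells) := by
    intro c h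
    rcases (hm c).mp h with rfl | rfl | h'
    · simp [La, ha]
    · simp [Lb, hb]
    · have := hrange c h'
      simp only [Lk c h', h', iff_true]; omega
  refine ⟨⟨(T, L), ⟨⟨⟨?_, ?_⟩, ?_, ?_, ?_, ?_⟩, Lr, ?_⟩⟩, fun c => rfl⟩
  · intro c h
    rcases (hm c).mp h with rfl | rfl | h'
    · simp only [Ta, Tb]; exact ⟨hbv, trivial, hadj⟩
    · simp only [Ta, Tb]; exact ⟨hav, trivial, dominoAdj_symm hadj⟩
    · simp only [Tk c h', Tk (t c) (t1 c h').1]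
      exact ⟨hsub _ (t1 c h').1, (t1 c h').2⟩
  · intro c h
    have h1 : c ≠ a := fun e => h (e ▸ hav)
    have h2 : c ≠ b := fun e => h (e ▸ hbv)
    simp only [T, h1, h2, if_false]
    exact t2 c (fun h3 => h (hsub c h3))
  · intro c h
    rcases (hm c).mp h with rfl | rfl | h'
    · simp only [Ta, La, Lb]
    · simp only [Tb, La, Lb]
    · simp only [Tk c h', Lk c h', Lk (t c) (t1 c h').1]
      exact hc c h'
  · intro c h
    simp only [L]
    rw [if_neg (fun h3 => h (hsub c h3)), if_neg h]
  · intro i j h h'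
    simp only
    by_cases h1 : (i, j + 1) ∈ κ.cells
    · have h2 : (i, j) ∈ κ.cells := κ.up_left_mem le_rfl (Nat.le_succ _) h1
      rw [Lk _ h1, Lk _ h2]
      exact hr i j h2 h1
    · have := Lr _ h
      have := Ln _ h'
      have := Lr _ h'
      grind
  · intro i j h h' hT
    simp only at hT ⊢
    by_cases h1 : (i + 1, j) ∈ κ.cells
    · have h2 : (i, j) ∈ κ.cells := κ.up_left_mem (Nat.le_succ _) le_rfl h1
      rw [Lk _ h1, Lk _ h2]
      rw [Tk _ h2] at hT
      exact hcol i j h2 h1 hT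
    · have e1 := Ln _ h'
      by_cases h2 : (i, j) ∈ κ.cells
      · have := (Ln _ h).mpr h2
        grind
      · exfalso
        have hne : (i + 1, j) ≠ (i, j) := by simp
        rcases (hm _).mp h with e | e | e
        · rcases (hm _).mp h' with e' | e' | e'
          · exact hne (e'.trans e.symm)
          · apply hT; rw [e, Ta, e']
          · exact h1 e'
        · rcases (hm _).mp h' with e' | e' | e'
          · apply hT; rw [e, Tb, e']
          · exact hne (e'.trans e.symm)
          · exact h1 e'
        · exact h2 e
  · intro q hq hqn
    by_cases h : q = n + 1
    · have : (ν.cells.filter fun c => L c = q) = {a, b} := by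
        ext c
        simp only [Finset.mem_filter, Finset.mem_insert, Finset.mem_singleton]
        constructor
        · rintro ⟨h1, h2⟩
          rcases (hm c).mp h1 with e | e | e
          · exact Or.inl e
          · exact Or.inr e
          · have := (Ln c h1).mpr e
            omega
        · rintro (rfl | rfl)
          · exact ⟨hav, by omega⟩
          · exact ⟨hbv, by omega⟩
      simp only [this]
      exact Finset.card_pair hab.symm
    · rw [← hcount q hq (by omega)]
      congr 1
      ext c
      simp only [Finset.mem_filter]
      constructor
      · rintro ⟨h1, h2⟩
        have h3 : c ∈ κ.cells := (Ln c h1).mp (by omega)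
        exact ⟨h3, by rw [← Lk c h3]; exact h2⟩
      · rintro ⟨h1, h2⟩
        exact ⟨hsub c h1, by rw [Lk c h1]; exact h2⟩

theorem sdt_branch (n : ℕ) (ν : YoungDiagram) :
    Nonempty (SDT ν (n + 1) ≃ Σ κ : {κ // Cov κ ν}, SDT κ.1 n) := by
  choose F hF hF' using fun y : SDT ν (n + 1) => exists_restrict y
  refine ⟨Equiv.ofBijective F ⟨?_, ?_⟩⟩
  · intro y y' h
    apply sdt_ext
    have recov : ∀ y : SDT ν (n + 1), ∀ c, y.1.2 c =
        if c ∈ ν.cells then (if c ∈ (F y).1.1.cells then (F y).2.1.2 c else n + 1) else 0 := by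
      intro y c
      by_cases h1 : c ∈ ν.cells
      · rw [if_pos h1]
        by_cases h2 : c ∈ (F y).1.1.cells
        · rw [if_pos h2, hF' y c, if_pos h2]
        · rw [if_neg h2]
          have h3 := hF y c
          have h4 := y.2.2.1 c h1
          grind
      · rw [if_neg h1]
        exact y.2.1.2.2.1 c h1
    intro c
    rw [recov y c, recov y' c, h]
  · intro p
    obtain ⟨y, hy⟩ := exists_extend p
    have hsub : ∀ c, c ∈ p.1.1.cells → c ∈ ν.cells := by
      intro c hc
      obtain ⟨k, hk⟩ := p.1.2
      obtain ⟨a, b, -, -, -, hν⟩ := covAt_dominoes hk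
      rw [hν]; simp only [Finset.mem_insert]; exact Or.inr (Or.inr hc)
    have hmem : ∀ c, c ∈ (F y).1.1.cells ↔ c ∈ p.1.1.cells := by
      intro c
      rw [hF y c, hy c]
      constructor
      · rintro ⟨h1, h2⟩
        by_contra h3
        rw [if_neg h3, if_pos h1] at h2
        omega
      · intro h
        rw [if_pos h]
        exact ⟨hsub c h, (p.2.2.2.1 c h).2⟩
    refine ⟨y, branch_ext hmem ?_⟩
    intro c
    rw [hF' y c]
    by_cases h : c ∈ p.1.1.cells
    · rw [if_pos ((hmem c).mpr h), hy c, if_pos h]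
    · rw [if_neg (fun h' => h ((hmem c).mp h'))]
      exact (p.2.2.1.2.2.1 c h).symm

theorem sdt_zero_empty {μ : YoungDiagram} (x : SDT μ 0) : μ = ⊥ := by
  ext c
  constructor
  · intro h
    have := x.2.2.1 c h
    omega
  · intro h
    simp at h

theorem sdt_zero_nonempty : Nonempty (SDT ⊥ 0) := by
  refine ⟨⟨(fun c => c, fun _ => 0), ⟨⟨⟨?_, ?_⟩, ?_, ?_, ?_, ?_⟩, ?_, ?_⟩⟩⟩ <;> simp
  intro k h1 h2
  omega

theorem sdt_zero_cov (κ lam : YoungDiagram) (h : Cov κ lam) : IsEmpty (SDT lam 0) := by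
  refine ⟨fun x => ?_⟩
  obtain rfl := sdt_zero_empty x
  obtain ⟨k, hk⟩ := h
  obtain ⟨a, b, -, -, -, hν⟩ := covAt_dominoes hk
  have : a ∈ (⊥ : YoungDiagram).cells := by rw [hν]; simp
  simp at this

theorem cov_card {κ ν : YoungDiagram} (h : Cov κ ν) : ν.cells.card = κ.cells.card + 2 := by
  obtain ⟨k, hk⟩ := h
  obtain ⟨a, b, hab, ha, hb, hν⟩ := covAt_dominoes hk
  rw [hν, Finset.card_insert_of_notMem, Finset.card_insert_of_notMem hb]
  rw [Finset.mem_insert, not_or]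
  exact ⟨(dominoAdj_ne hab).symm, ha⟩

theorem sdt_card (n : ℕ) : ∀ {μ : YoungDiagram}, SDT μ n → μ.cells.card = 2 * n := by
  induction n with
  | zero =>
    intro μ x
    rw [sdt_zero_empty x]
    simp
  | succ n ih =>
    intro μ x
    obtain ⟨e⟩ := sdt_branch n μ
    have := cov_card (e x).1.2
    have := ih (e x).2
    omega

/-! ### Signed permutations -/

theorem signed_abs_le {n : ℕ} {f : Equiv.Perm ℤ} (hf : IsSignedPerm n f) {i : ℤ}
    (hi : |i| ≤ n) : |f i| ≤ n := by
  by_contra! h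
  have := f.injective (hf.2 (f i) h)
  rw [this] at h
  omega

theorem signed_zero {n : ℕ} {f : Equiv.Perm ℤ} (hf : IsSignedPerm n f) : f 0 = 0 := by
  have := hf.1 0
  simp only [neg_zero] at this
  omega

theorem signed_mul {n : ℕ} {f g : Equiv.Perm ℤ} (hf : IsSignedPerm n f) (hg : IsSignedPerm n g) :
    IsSignedPerm n (f * g) := by
  refine ⟨fun i => ?_, fun i hi => ?_⟩
  · simp only [Equiv.Perm.mul_apply, hg.1, hf.1]
  · simp only [Equiv.Perm.mul_apply, hg.2 i hi, hf.2 i hi]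

theorem signed_inv {n : ℕ} {f : Equiv.Perm ℤ} (hf : IsSignedPerm n f) : IsSignedPerm n f⁻¹ := by
  refine ⟨fun i => ?_, fun i hi => ?_⟩
  · rw [Equiv.Perm.inv_eq_iff_eq, hf.1]; simp
  · rw [Equiv.Perm.inv_eq_iff_eq, hf.2 i hi]

theorem signed_mono {n : ℕ} {f : Equiv.Perm ℤ} (hf : IsSignedPerm n f) : IsSignedPerm (n + 1) f :=
  ⟨hf.1, fun i hi => hf.2 i (by push_cast at hi; omega)⟩

theorem signed_restrict {n : ℕ} {f : Equiv.Perm ℤ} (hf : IsSignedPerm (n + 1) f)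
    (h : f ((n : ℤ) + 1) = (n : ℤ) + 1) : IsSignedPerm n f := by
  refine ⟨hf.1, fun i hi => ?_⟩
  by_cases h1 : ((n + 1 : ℕ) : ℤ) < |i|
  · exact hf.2 i h1
  · have h2 : |i| = (n : ℤ) + 1 := by push_cast at h1; omega
    rcases (abs_eq (by omega)).mp h2 with rfl | rfl
    · exact h
    · rw [hf.1, h]

theorem exists_signed (n : ℕ) (v : ℤ) (h0 : v ≠ 0) (hv : |v| ≤ n + 1) :
    ∃ τ : Equiv.Perm ℤ, IsSignedPerm (n + 1) τ ∧ τ ((n : ℤ) + 1) = v := by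
  have hv' := abs_le.mp hv
  by_cases h1 : v = -((n : ℤ) + 1)
  · refine ⟨Equiv.swap ((n : ℤ) + 1) (-((n : ℤ) + 1)), ⟨fun i => ?_, fun i hi => ?_⟩, ?_⟩
    · simp only [Equiv.swap_apply_def]
      split_ifs <;> omega
    · push_cast at hi
      apply Equiv.swap_apply_of_ne_of_ne
      · rintro rfl; rw [abs_of_nonneg (by omega)] at hi; omega
      · rintro rfl; rw [abs_neg, abs_of_nonneg (by omega)] at hi; omega
    · rw [Equiv.swap_apply_left, h1]
  · refine ⟨Equiv.swap ((n : ℤ) + 1) v * Equiv.swap (-((n : ℤ) + 1)) (-v),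
      ⟨fun i => ?_, fun i hi => ?_⟩, ?_⟩
    · simp only [Equiv.Perm.mul_apply, Equiv.swap_apply_def]
      split_ifs <;> omega
    · push_cast at hi
      have : (n : ℤ) + 1 < i ∨ i < -((n : ℤ) + 1) := by
        rcases abs_cases i with ⟨h1, h2⟩ | ⟨h1, h2⟩ <;> omega
      simp only [Equiv.Perm.mul_apply, Equiv.swap_apply_def]
      split_ifs <;> omega
    · simp only [Equiv.Perm.mul_apply, Equiv.swap_apply_def]
      split_ifs <;> omega

theorem signed_step (n : ℕ) :
    Nonempty ({f : Equiv.Perm ℤ // IsSignedPerm (n + 1) f} ≃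
      Fin (2 * (n + 1)) × {f : Equiv.Perm ℤ // IsSignedPerm n f}) := by
  let V := {v : ℤ // v ≠ 0 ∧ |v| ≤ n + 1}
  choose τ hτ hτ' using fun v : V => exists_signed n v.1 v.2.1 v.2.2
  have hv : ∀ f : {f : Equiv.Perm ℤ // IsSignedPerm (n + 1) f},
      f.1 ((n : ℤ) + 1) ≠ 0 ∧ |f.1 ((n : ℤ) + 1)| ≤ (n : ℤ) + 1 := by
    intro f
    constructor
    · intro h
      have := f.1.injective (h.trans (signed_zero f.2).symm)
      omega
    · have := signed_abs_le f.2 (i := (n : ℤ) + 1) (by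
        rw [abs_of_nonneg (by omega)]; push_cast; exact le_rfl)
      push_cast at this
      exact this
  have e1 : {f : Equiv.Perm ℤ // IsSignedPerm (n + 1) f} ≃
      V × {f : Equiv.Perm ℤ // IsSignedPerm n f} :=
    { toFun := fun f => (⟨_, hv f⟩, ⟨(τ ⟨_, hv f⟩)⁻¹ * f.1, signed_restrict
        (signed_mul (signed_inv (hτ _)) f.2) (by
          rw [Equiv.Perm.mul_apply, Equiv.Perm.inv_eq_iff_eq, hτ'])⟩)
      invFun := fun p => ⟨τ p.1 * p.2.1, signed_mul (hτ _) (signed_mono p.2.2)⟩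
      left_inv := by
        intro f
        apply Subtype.ext
        simp
      right_inv := by
        rintro ⟨v, g, hg⟩
        have hgm : g ((n : ℤ) + 1) = (n : ℤ) + 1 :=
          hg.2 _ (by rw [abs_of_nonneg (by omega)]; omega)
        have key : (τ v * g) ((n : ℤ) + 1) = v.1 := by
          rw [Equiv.Perm.mul_apply, hgm, hτ']
        have key2 : (⟨_, hv ⟨τ v * g, signed_mul (hτ _) (signed_mono hg)⟩⟩ : V) = v :=
          Subtype.ext key
        apply Prod.ext
        · exact key2
        · apply Subtype.ext
          simp only [key2, inv_mul_cancel_left] }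
  have e2 : V ≃ ((Finset.Icc (-((n : ℤ) + 1)) ((n : ℤ) + 1)).erase 0) :=
    Equiv.subtypeEquivRight (fun v => by
      rw [Finset.mem_erase, Finset.mem_Icc, abs_le])
  have e3 : ((Finset.Icc (-((n : ℤ) + 1)) ((n : ℤ) + 1)).erase 0) ≃ Fin (2 * (n + 1)) :=
    Fintype.equivOfCardEq (by
      rw [Fintype.card_coe, Finset.card_erase_of_mem (by rw [Finset.mem_Icc]; omega),
        Int.card_Icc, Fintype.card_fin]
      omega)
  exact ⟨e1.trans ((e2.trans e3).prodCongr (Equiv.refl _))⟩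

theorem signed_zero_unique : Nonempty (Unique {f : Equiv.Perm ℤ // IsSignedPerm 0 f}) := by
  refine ⟨⟨⟨⟨1, fun _ => rfl, fun _ _ => rfl⟩⟩, ?_⟩⟩
  rintro ⟨f, hf⟩
  apply Subtype.ext
  ext i
  by_cases h : i = 0
  · subst h; simpa using signed_zero hf
  · exact hf.2 i (by simpa using h)

theorem main_equiv (n : ℕ) :
    Nonempty ({f : Equiv.Perm ℤ // IsSignedPerm n f} ≃ Σ μ, SDT μ n × SDT μ n) := by
  induction n with
  | zero =>
    obtain ⟨u⟩ := signed_zero_unique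
    obtain ⟨x⟩ := sdt_zero_nonempty
    have hu : Unique (Σ μ, SDT μ 0 × SDT μ 0) :=
      { default := ⟨⊥, x, x⟩
        uniq := by
          rintro ⟨μ, y, z⟩
          obtain rfl := sdt_zero_empty y
          have h : ∀ w : SDT ⊥ 0, w = x := fun w => sdt_ext fun c => by
            rw [w.2.1.2.2.1 c (by simp), x.2.1.2.2.1 c (by simp)]
          rw [h y, h z] }
    exact ⟨Equiv.ofUnique _ _⟩
  | succ n ih =>
    obtain ⟨e⟩ := ih
    obtain ⟨s⟩ := signed_step n
    obtain ⟨p⟩ := pair_step (fun n μ => SDT μ n) sdt_zero_cov sdt_branch n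
    exact ⟨s.trans (((Equiv.refl _).prodCongr e).trans p.symm)⟩

/-- Barbasch–Vogan: signed permutations of `B_n` are in bijection with pairs of
standard domino tableaux of the same shape, the shape being a partition of `2n`
with empty 2-core (i.e. tileable by dominoes). -/
theorem stmt13 (n : ℕ) (hn : 1 ≤ n) :
    Nonempty ({f : Equiv.Perm ℤ // IsSignedPerm n f} ≃
      (μ : {μ : YoungDiagram // μ.cells.card = 2 * n ∧ ∃ t, IsDominoTiling μ t}) ×
        (SDT μ.1 n × SDT μ.1 n)) := by
  obtain ⟨e⟩ := main_equiv n
  exact ⟨e.trans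
    { toFun := fun x => ⟨⟨x.1, sdt_card n x.2.1, _, x.2.1.2.1.1⟩, x.2⟩
      invFun := fun x => ⟨x.1.1, x.2⟩
      left_inv := fun _ => rfl
      right_inv := fun _ => rfl }⟩
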